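/- Let Ω be an open subset of ℝⁿ and let f, g, h be H-continuous pairs on Ω. Then (f ⊕ g) ⊕ h = f ⊕ (g ⊕ h), where each ⊕ denotes the unique H-continuous pair contained in the pointwise interval sum of its two arguments. -/

import Mathlib

open Set

/-- Points of `ℝⁿ`. -/
abbrev Pt (n : ℕ) := EuclideanSpace ℝ (Fin n)

/-- Lower Baire operator `I(D,Ω,f)(x) = sup_{δ>0} inf { f y : y ∈ B_δ(x) ∩ D }`,
where `B_δ(x) = { y ∈ Ω : ‖y - x‖ < δ }`. -/
noncomputable def Ilow {n : ℕ} (D Om : Set (Pt n)) (f : Pt n → ℝ) (x : Pt n) : ℝ :=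
  sSup {a : ℝ | ∃ δ : ℝ, 0 < δ ∧
    a = sInf (f '' {y | y ∈ Om ∧ ‖y - x‖ < δ ∧ y ∈ D})}

/-- Upper Baire operator `S(D,Ω,f)(x) = inf_{δ>0} sup { f y : y ∈ B_δ(x) ∩ D }`. -/
noncomputable def Shigh {n : ℕ} (D Om : Set (Pt n)) (f : Pt n → ℝ) (x : Pt n) : ℝ :=
  sInf {a : ℝ | ∃ δ : ℝ, 0 < δ ∧
    a = sSup (f '' {y | y ∈ Om ∧ ‖y - x‖ < δ ∧ y ∈ D})}

/-- `f`, defined on `D ⊆ Ω`, is locally bounded relative to `Ω`. -/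
def LocBddOn {n : ℕ} (Om D : Set (Pt n)) (f : Pt n → ℝ) : Prop :=
  ∀ x ∈ Om, ∃ δ : ℝ, 0 < δ ∧ ∃ M : ℝ,
    ∀ y, y ∈ Om → ‖y - x‖ < δ → y ∈ D → |f y| < M

/-- `(u, v)` encodes an interval-valued function `x ↦ [u x, v x]` on `Om`. -/
def IntervalPair {n : ℕ} (Om : Set (Pt n)) (u v : Pt n → ℝ) : Prop :=
  LocBddOn Om Om u ∧ LocBddOn Om Om v ∧ ∀ x ∈ Om, u x ≤ v x

/-- The pair `(u, v)` is S-continuous on `Om`: `I(u) = u` and `S(v) = v`. -/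
def SCont {n : ℕ} (Om : Set (Pt n)) (u v : Pt n → ℝ) : Prop :=
  ∀ x ∈ Om, Ilow Om Om u x = u x ∧ Shigh Om Om v x = v x

/-- The pair `(u, v)` is Hausdorff continuous on `Om`. -/
def HCont {n : ℕ} (Om : Set (Pt n)) (u v : Pt n → ℝ) : Prop :=
  ∀ p q : Pt n → ℝ, LocBddOn Om Om p → LocBddOn Om Om q →
    (∀ x ∈ Om, u x ≤ p x ∧ p x ≤ q x ∧ q x ≤ v x) →
    ∀ x ∈ Om, Ilow Om Om p x = u x ∧ Shigh Om Om q x = v x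

/-- `(u, v)` is an H-continuous interval pair on `Om`. -/
def HContPair {n : ℕ} (Om : Set (Pt n)) (u v : Pt n → ℝ) : Prop :=
  IntervalPair Om u v ∧ HCont Om u v

/-- Lower endpoint of the pointwise interval product. -/
noncomputable def imin {n : ℕ} (u₁ v₁ u₂ v₂ : Pt n → ℝ) (x : Pt n) : ℝ :=
  min (min (u₁ x * u₂ x) (u₁ x * v₂ x)) (min (v₁ x * u₂ x) (v₁ x * v₂ x))

/-- Upper endpoint of the pointwise interval product. -/
noncomputable def imax {n : ℕ} (u₁ v₁ u₂ v₂ : Pt n → ℝ) (x : Pt n) : ℝ :=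
  max (max (u₁ x * u₂ x) (u₁ x * v₂ x)) (max (v₁ x * u₂ x) (v₁ x * v₂ x))

/-- `(pl, pu)` is the H-continuous pair contained pointwise in the interval sum of
`(u₁, v₁)` and `(u₂, v₂)`, i.e. `(pl, pu) = (u₁,v₁) ⊕ (u₂,v₂)`. -/
def IsOplus {n : ℕ} (Om : Set (Pt n)) (u₁ v₁ u₂ v₂ pl pu : Pt n → ℝ) : Prop :=
  HContPair Om pl pu ∧
    ∀ x ∈ Om, u₁ x + u₂ x ≤ pl x ∧ pl x ≤ pu x ∧ pu x ≤ v₁ x + v₂ x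

/-- `(ql, qu)` is the H-continuous pair contained pointwise in the interval product of
`(u₁, v₁)` and `(u₂, v₂)`, i.e. `(ql, qu) = (u₁,v₁) ⊗ (u₂,v₂)`. -/
def IsOtimes {n : ℕ} (Om : Set (Pt n)) (u₁ v₁ u₂ v₂ ql qu : Pt n → ℝ) : Prop :=
  HContPair Om ql qu ∧
    ∀ x ∈ Om, imin u₁ v₁ u₂ v₂ x ≤ ql x ∧ ql x ≤ qu x ∧ qu x ≤ imax u₁ v₁ u₂ v₂ x

theorem ilow_outer_bdd {n : ℕ} {Om : Set (Pt n)} {f : Pt n → ℝ} {x : Pt n} (hx : x ∈ Om) :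
    BddAbove {a : ℝ | ∃ δ : ℝ, 0 < δ ∧
      a = sInf (f '' {y | y ∈ Om ∧ ‖y - x‖ < δ ∧ y ∈ Om})} := by
  refine ⟨max (f x) 0, ?_⟩
  rintro a ⟨δ, hδ, rfl⟩
  by_cases hb : BddBelow (f '' {y | y ∈ Om ∧ ‖y - x‖ < δ ∧ y ∈ Om})
  · exact le_max_of_le_left (csInf_le hb ⟨x, ⟨hx, by simpa using hδ, hx⟩, rfl⟩)
  · rw [Real.sInf_of_not_bddBelow hb]
    exact le_max_right _ _

theorem ilow_bdd {n : ℕ} {Om : Set (Pt n)} {f : Pt n → ℝ}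
    (h : ∀ x ∈ Om, Ilow Om Om f x = f x) (x : Pt n) (δ : ℝ) (hδ : 0 < δ) :
    BddBelow (f '' {y | y ∈ Om ∧ ‖y - x‖ < δ ∧ y ∈ Om}) := by
  by_contra hb
  apply hb
  refine ⟨0, ?_⟩
  rintro _ ⟨z, ⟨hz, hzx, _⟩, rfl⟩
  rw [← h z hz]
  refine le_csSup (ilow_outer_bdd hz) ⟨δ + δ, by linarith, ?_⟩
  rw [Real.sInf_of_not_bddBelow]
  intro hb'
  apply hb
  refine hb'.mono (image_mono ?_)
  rintro y ⟨hy, hyx, _⟩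
  refine ⟨hy, ?_, hy⟩
  have := norm_sub_le_norm_sub_add_norm_sub y x z
  rw [norm_sub_rev x z] at this
  linarith

theorem ilow_near {n : ℕ} {Om : Set (Pt n)} {f : Pt n → ℝ} {x : Pt n}
    (hb : ∀ δ : ℝ, 0 < δ → BddBelow (f '' {y | y ∈ Om ∧ ‖y - x‖ < δ ∧ y ∈ Om}))
    {c : ℝ} (hc : c < Ilow Om Om f x) :
    ∃ δ : ℝ, 0 < δ ∧ ∀ y ∈ Om, ‖y - x‖ < δ → c < f y := by
  unfold Ilow at hc
  obtain ⟨a, ⟨δ, hδ, rfl⟩, ha⟩ := exists_lt_of_lt_csSup (by exact ⟨_, 1, one_pos, rfl⟩) hc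
  exact ⟨δ, hδ, fun y hy hyx => ha.trans_le (csInf_le (hb δ hδ) ⟨y, ⟨hy, hyx, hy⟩, rfl⟩)⟩

theorem ilow_freq {n : ℕ} {Om : Set (Pt n)} {f : Pt n → ℝ} {x : Pt n} (hx : x ∈ Om)
    {c : ℝ} (hc : Ilow Om Om f x < c) (δ : ℝ) (hδ : 0 < δ) :
    ∃ y ∈ Om, ‖y - x‖ < δ ∧ f y < c := by
  have h1 : sInf (f '' {y | y ∈ Om ∧ ‖y - x‖ < δ ∧ y ∈ Om}) < c :=
    (le_csSup (ilow_outer_bdd hx) ⟨δ, hδ, rfl⟩).trans_lt hc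
  obtain ⟨_, ⟨y, ⟨hy, hyx, _⟩, rfl⟩, h⟩ :=
    exists_lt_of_csInf_lt (by exact ⟨_, x, ⟨hx, by simpa using hδ, hx⟩, rfl⟩) h1
  exact ⟨y, hy, hyx, h⟩

theorem shigh_eq {n : ℕ} (Om : Set (Pt n)) (f : Pt n → ℝ) (x : Pt n) :
    Shigh Om Om f x = - Ilow Om Om (fun y => - f y) x := by
  unfold Shigh Ilow
  rw [Real.sInf_def]
  congr 2
  ext a
  simp only [Set.mem_neg, Set.mem_setOf_eq]
  refine exists_congr fun δ => and_congr_right fun _ => ?_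
  have : (fun y => - f y) '' {y | y ∈ Om ∧ ‖y - x‖ < δ ∧ y ∈ Om}
      = -(f '' {y | y ∈ Om ∧ ‖y - x‖ < δ ∧ y ∈ Om}) := by
    rw [← Set.image_neg_eq_neg, Set.image_image]
  rw [this, Real.sInf_def, neg_neg]
  constructor <;> intro h <;> linarith

structure Facts {n : ℕ} (Om : Set (Pt n)) (u v : Pt n → ℝ) : Prop where
  lsc : ∀ x ∈ Om, ∀ c, c < u x → ∃ δ : ℝ, 0 < δ ∧ ∀ y ∈ Om, ‖y - x‖ < δ → c < u y
  usc : ∀ x ∈ Om, ∀ c, v x < c → ∃ δ : ℝ, 0 < δ ∧ ∀ y ∈ Om, ‖y - x‖ < δ → v y < c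
  freq : ∀ x ∈ Om, ∀ c, c < v x → ∀ δ : ℝ, 0 < δ → ∃ y ∈ Om, ‖y - x‖ < δ ∧ c < u y

theorem HContPair.facts {n : ℕ} {Om : Set (Pt n)} {u v : Pt n → ℝ} (h : HContPair Om u v) :
    Facts Om u v := by
  obtain ⟨⟨hu, hv, huv⟩, hH⟩ := h
  have h1 := hH u v hu hv (fun x hx => ⟨le_rfl, huv x hx, le_rfl⟩)
  have h2 := hH u u hu hu (fun x hx => ⟨le_rfl, le_rfl, huv x hx⟩)
  have hv' : ∀ x ∈ Om, Ilow Om Om (fun y => - v y) x = - v x := fun x hx => by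
    have := (h1 x hx).2
    rw [shigh_eq] at this
    linarith
  constructor
  · intro x hx c hc
    exact ilow_near (ilow_bdd (fun x hx => (h1 x hx).1) x) (by rwa [(h1 x hx).1])
  · intro x hx c hc
    obtain ⟨δ, hδ, h⟩ := ilow_near (c := -c) (ilow_bdd hv' x) (by rw [hv' x hx]; linarith)
    exact ⟨δ, hδ, fun y hy hyx => by have := h y hy hyx; linarith⟩
  · intro x hx c hc δ hδ
    obtain ⟨y, hy, hyx, h⟩ := ilow_freq (f := fun y => - u y) (c := -c) hx
      (by have := (h2 x hx).2; rw [shigh_eq] at this; linarith) δ hδ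
    exact ⟨y, hy, hyx, by linarith⟩

theorem Facts.dense {n : ℕ} {Om : Set (Pt n)} {u v : Pt n → ℝ} (h : Facts Om u v)
    (x : Pt n) (hx : x ∈ Om) (r ε : ℝ) (hr : 0 < r) (hε : 0 < ε) :
    ∃ y ∈ Om, ∃ s : ℝ, 0 < s ∧ ∀ z ∈ Om, ‖z - y‖ < s → ‖z - x‖ < r ∧ v z - u z < ε := by
  obtain ⟨d, hd, h1⟩ := h.usc x hx (v x + ε / 2) (by linarith)
  obtain ⟨y, hy, hyx, hyu⟩ := h.freq x hx (v x - ε / 2) (by linarith) (min d r) (lt_min hd hr)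
  obtain ⟨e, he, h2⟩ := h.lsc y hy _ hyu
  refine ⟨y, hy, min e (min d r - ‖y - x‖), lt_min he (by linarith), fun z hz hzy => ?_⟩
  have h3 := norm_sub_le_norm_sub_add_norm_sub z y x
  have h4 := hzy.trans_le (min_le_left _ _)
  have h5 := hzy.trans_le (min_le_right _ _)
  have h6 := min_le_left d r
  have h7 := min_le_right d r
  have h8 := h1 z hz (by linarith)
  have h9 := h2 z hz h4
  exact ⟨by linarith, by linarith⟩

theorem upper_le {n : ℕ} {Om : Set (Pt n)} {u₁ v₁ u₂ v₂ u₃ v₃ al au bl bu : Pt n → ℝ}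
    (h₁ : Facts Om u₁ v₁) (h₂ : Facts Om u₂ v₂) (h₃ : Facts Om u₃ v₃)
    (ha : Facts Om al au) (hb : Facts Om bl bu)
    (hle : ∀ x ∈ Om, al x ≤ v₁ x + v₂ x + v₃ x)
    (hge : ∀ x ∈ Om, u₁ x + u₂ x + u₃ x ≤ bu x) : ∀ x ∈ Om, au x ≤ bu x := by
  intro x hx
  by_contra! hlt
  obtain ⟨ε, hε, hε'⟩ : ∃ ε : ℝ, 0 < ε ∧ bu x + 5 * ε = au x :=
    ⟨(au x - bu x) / 5, by linarith, by ring⟩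
  obtain ⟨d, hd, hbd⟩ := hb.usc x hx (bu x + ε) (by linarith)
  obtain ⟨y, hy, hyx, hya⟩ := ha.freq x hx (au x - ε) (by linarith) d hd
  obtain ⟨e, he, hae⟩ := ha.lsc y hy _ hya
  obtain ⟨y1, hy1, s1, hs1, H1⟩ := h₁.dense y hy (min e (d - ‖y - x‖)) ε
    (lt_min he (by linarith)) hε
  obtain ⟨y2, hy2, s2, hs2, H2⟩ := h₂.dense y1 hy1 s1 ε hs1 hε
  obtain ⟨z, hz, s3, hs3, H3⟩ := h₃.dense y2 hy2 s2 ε hs2 hε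
  obtain ⟨a3, b3⟩ := H3 z hz (by simpa using hs3)
  obtain ⟨a2, b2⟩ := H2 z hz a3
  obtain ⟨a1, b1⟩ := H1 z hz a2
  have h4 := a1.trans_le (min_le_left _ _)
  have h5 := a1.trans_le (min_le_right _ _)
  have h3 := norm_sub_le_norm_sub_add_norm_sub z y x
  have h6 := hae z hz h4
  have h7 := hbd z hz (by linarith)
  have h8 := hle z hz
  have h9 := hge z hz
  linarith

theorem stmt12 {n : ℕ} (Om : Set (Pt n)) (hOm : IsOpen Om)
    (u₁ v₁ u₂ v₂ u₃ v₃ : Pt n → ℝ)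
    (h₁ : HContPair Om u₁ v₁) (h₂ : HContPair Om u₂ v₂) (h₃ : HContPair Om u₃ v₃)
    (pl pu ql qu al au bl bu : Pt n → ℝ)
    (hfg : IsOplus Om u₁ v₁ u₂ v₂ pl pu)
    (hfg_h : IsOplus Om pl pu u₃ v₃ al au)
    (hgh : IsOplus Om u₂ v₂ u₃ v₃ ql qu)
    (hf_gh : IsOplus Om u₁ v₁ ql qu bl bu) :
    ∀ x ∈ Om, al x = bl x ∧ au x = bu x := by
  have ub : ∀ x ∈ Om, au x = bu x := fun x hx => le_antisymm
    (upper_le h₁.facts h₂.facts h₃.facts hfg_h.1.facts hf_gh.1.facts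
      (fun x hx => by
        have := hfg.2 x hx; have := hfg_h.2 x hx; linarith)
      (fun x hx => by
        have := hgh.2 x hx; have := hf_gh.2 x hx; linarith) x hx)
    (upper_le h₁.facts h₂.facts h₃.facts hf_gh.1.facts hfg_h.1.facts
      (fun x hx => by
        have := hgh.2 x hx; have := hf_gh.2 x hx; linarith)
      (fun x hx => by
        have := hfg.2 x hx; have := hfg_h.2 x hx; linarith) x hx)
  intro x hx
  refine ⟨?_, ub x hx⟩
  have hau := hfg_h.1.1.2.1
  have e1 := (hfg_h.1.2 au au hau hau
    (fun x hx => ⟨hfg_h.1.1.2.2 x hx, le_rfl, le_rfl⟩) x hx).1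
  have e2 := (hf_gh.1.2 au au hau hau
    (fun x hx => ⟨by rw [ub x hx]; exact hf_gh.1.1.2.2 x hx, le_rfl, (ub x hx).le⟩) x hx).1
  rw [← e1, e2]
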